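/- Let 0 < φ < 1, let f be the density of an absolutely continuous nonnegative random variable Z with distribution function F satisfying F(0) = 0, let v : [0,∞) → ℝ be locally bounded, and let m be the locally bounded solution of m(u) = φ ∫₀^u m(u−y) f(y) dy + v(u). Assume: (1) Z has finite variance; (2) F and v belong to C²₀([0,∞)); (3) f' and v'' belong to C²([0,∞)) (continuous on [0,∞) with continuous second derivative on (0,∞)); (4) I₀(f'') < ∞ and I₂(f'') < ∞; (5) sup_u |u² w₁(u)| < ∞ and sup_u |u² w₂(u)| < ∞; (6) sup_u |u² w₁''(u)| < ∞ and sup_u |u² w₂''(u)| < ∞, where w₁(u) := φ v(0) f(u) + v'(u) and w₂(u) := φ m'(0) f(u) + w₁'(u) with m'(0) = φ v(0) f(0) + v'(0). Then m is three times continuously differentiable on (0,∞) and sup_{u>0} |u² m'''(u)| ≤ φ ( (I₀(f'') + |f'(0)|) · sup_{u>0}|u² m'(u)| + 2 I₁(f'') · sup_{u>0}|u m'(u)| + I₂(f'') · ‖m'‖ ) + φ f(0) · sup_{u>0}|u² m''(u)| + sup_{u>0}|u² w₁''(u)| < ∞. -/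

import Mathlib

open MeasureTheory Filter Topology
open scoped ENNReal

/-- The function `w₁(u) = φ v(0) f(u) + v'(u)` (note `m(0) = v(0)`). -/
noncomputable def w1 (φ : ℝ) (v f : ℝ → ℝ) : ℝ → ℝ :=
  fun u => φ * v 0 * f u + deriv v u

/-- The function `w₂(u) = φ m'(0) f(u) + w₁'(u)`, where `m'(0) = φ v(0) f(0) + v'(0)`
is expressed through the limits `f0 = f(0⁺)` and `v'0 = v'(0⁺)`. -/
noncomputable def w2 (φ f0 v'0 : ℝ) (v f : ℝ → ℝ) : ℝ → ℝ :=
  fun u => φ * (φ * v 0 * f0 + v'0) * f u + deriv (w1 φ v f) u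

/-! Differentiating the renewal equation `g = φ (f ⋆ g) + w` gives a renewal equation with the same
kernel for `g'`, with forcing term `φ g(0⁺) f + w'`; the forcing terms for `m'` and `m''` are `w₁`
and `w₂`. In a weighted estimate, expanding `uⁿ = (y + (u - y))ⁿ` inside the convolution bounds
`sup |uⁿ (f ⋆ g)(u)|` by the products of the moments of `f` with the weighted suprema of `g`, and
the only term carrying the full weight `n` on `g` has coefficient `φ ∫ |f| < 1`. On `(0, T]` that
term is finite and can be absorbed into the left-hand side, so by induction on `n` the weighted
suprema are finite, uniformly in `T`. The stated bound is the same expansion with `n = 2` for the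
second derivative of the equation for `m'`, where the convolution is against `f''`.

The solution is not assumed measurable, and the Bochner integral of a non-integrable function is
`0`, so the measurability of the solution has to be extracted from the equation.
-/

section Measurability

variable {Y : Type*} [TopologicalSpace Y] [SecondCountableTopology Y] [MeasurableSpace Y]

lemma exists_isOpen_aemeasurable_restrict_maximal {β : Type*} [MeasurableSpace β]
    (m : Y → β) (μ : Measure Y) :
    ∃ O, IsOpen O ∧ AEMeasurable m (μ.restrict O) ∧
      ∀ I, IsOpen I → AEMeasurable m (μ.restrict I) → I ⊆ O := by
  set S : Set (Set Y) := {I | IsOpen I ∧ AEMeasurable m (μ.restrict I)}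
  obtain ⟨T, hT_countable, hTS, hT_union⟩ :=
    TopologicalSpace.isOpen_sUnion_countable S fun I hI => hI.1
  refine ⟨⋃₀ S, isOpen_sUnion fun I hI => hI.1, ?_, fun I hI hmI =>
    Set.subset_sUnion_of_mem ⟨hI, hmI⟩⟩
  rw [← hT_union, Set.sUnion_eq_iUnion]
  have := hT_countable.to_subtype
  exact aemeasurable_iUnion_iff.2 fun I => (hTS I.2).2

-- The Bochner integral is `0` at every `x` for which the integrand is not integrable, and elsewhere
-- `m` is a.e. measurable on the open support of `K x`; the set of `x` for which that support lies
-- in the largest open set where `m` is a.e. measurable is closed.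
theorem measurable_integral_mul_of_isOpen_support {X : Type*} [TopologicalSpace X]
    [MeasurableSpace X] [OpensMeasurableSpace X] [OpensMeasurableSpace Y] {μ : Measure Y}
    [SFinite μ] (m : Y → ℝ) {K : X → Y → ℝ} (hK : Measurable (Function.uncurry K))
    (hKo : IsOpen (Function.support (Function.uncurry K))) :
    Measurable fun x => ∫ y, m y * K x y ∂μ := by
  obtain ⟨O, hO, hmO, hO_max⟩ := exists_isOpen_aemeasurable_restrict_maximal m μ
  set n : Y → ℝ := ((aemeasurable_indicator_iff hO.measurableSet).2 hmO).mk (O.indicator m)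
  have hn : n =ᵐ[μ] O.indicator m := (AEMeasurable.ae_eq_mk _).symm
  set C : Set X := {x | Function.support (K x) ⊆ O}
  have hC : IsClosed C := by
    have : C = ⋂ y ∈ Oᶜ, {x | Function.uncurry K (x, y) ≠ 0}ᶜ := by
      ext x
      simp only [C, Set.mem_ofPred_eq, Set.mem_iInter, Set.mem_compl_iff,
        Function.uncurry_apply_pair]
      exact ⟨fun h y hy hxy => hy (h hxy), fun h y hxy => by_contra fun hy => h y hy hxy⟩
    rw [this]
    exact isClosed_biInter fun y _ =>
      (hKo.preimage (Continuous.prodMk_left y)).isClosed_compl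
  have h_eq : (fun x => ∫ y, m y * K x y ∂μ) = C.indicator fun x => ∫ y, n y * K x y ∂μ := by
    ext x
    by_cases hx : x ∈ C
    · rw [Set.indicator_of_mem hx]
      refine integral_congr_ae ?_
      filter_upwards [hn] with y hy
      by_cases hxy : K x y = 0
      · simp only [hxy, mul_zero]
      · rw [hy, Set.indicator_of_mem (hx hxy)]
    · rw [Set.indicator_of_notMem hx]
      refine integral_undef fun h_int => hx ?_
      have hKx : Measurable (K x) := hK.comp measurable_prodMk_left
      have hVo : IsOpen (Function.support (K x)) := hKo.preimage (Continuous.prodMk_right x)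
      refine hO_max _ hVo ((h_int.aemeasurable.restrict.div hKx.aemeasurable).congr ?_)
      filter_upwards [ae_restrict_mem hVo.measurableSet] with y hy
      exact mul_div_cancel_right₀ _ hy
  rw [h_eq]
  refine Measurable.indicator ?_ hC.measurableSet
  refine (StronglyMeasurable.integral_prod_right (f := fun x y => n y * K x y)
    (Measurable.stronglyMeasurable ?_)).measurable
  exact ((AEMeasurable.measurable_mk _).comp measurable_snd).mul hK

end Measurability

section HalfLine

variable {k g h p q r : ℝ → ℝ} {a b p₀ r₀ : ℝ}

lemma intervalIntegrable_of_locallyIntegrableOn_Ici (hk : LocallyIntegrableOn k (Set.Ici 0))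
    (ha : 0 ≤ a) (hb : 0 ≤ b) : IntervalIntegrable k volume a b :=
  (hk.integrableOn_compact_subset (fun _ hx => (le_inf ha hb).trans hx.1)
    isCompact_uIcc).intervalIntegrable

lemma integrableOn_Ioc_of_locallyIntegrableOn_Ici (hk : LocallyIntegrableOn k (Set.Ici 0))
    (T : ℝ) : IntegrableOn k (Set.Ioc 0 T) :=
  (hk.integrableOn_compact_subset Set.Icc_subset_Ici_self isCompact_Icc).mono_set
    Set.Ioc_subset_Icc_self

lemma locallyIntegrableOn_Ici_of_integrableOn_Ioc (hk : ∀ T, IntegrableOn k (Set.Ioc 0 T)) :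
    LocallyIntegrableOn k (Set.Ici 0) := by
  refine (locallyIntegrableOn_iff isClosed_Ici.isLocallyClosed).2 fun K hK hKc => ?_
  obtain ⟨T, hT⟩ := hKc.bddAbove
  exact ((integrableOn_Icc_iff_integrableOn_Ioc enorm_ne_top).2 (hk T)).mono_set
    fun x hx => ⟨hK hx, hT hx⟩

/-- `g` is continuous on `(0, ∞)` with limit `a` at `0⁺`: the class `C⁰₀([0,∞))`, with the limit
named and `g 0` left unconstrained. -/
structure ContinuousWithLimit (g : ℝ → ℝ) (a : ℝ) : Prop where
  continuousOn : ContinuousOn g (Set.Ioi 0)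
  tendsto : Tendsto g (𝓝[>] 0) (𝓝 a)

namespace ContinuousWithLimit

lemma continuousOn_update (hg : ContinuousWithLimit g a) :
    ContinuousOn (Function.update g 0 a) (Set.Ici 0) := by
  rw [continuousOn_update_iff, Set.Ici_sdiff_left]
  exact ⟨hg.continuousOn, fun _ => hg.tendsto⟩

lemma locallyIntegrableOn (hg : ContinuousWithLimit g a) :
    LocallyIntegrableOn g (Set.Ici 0) := by
  refine locallyIntegrableOn_Ici_of_integrableOn_Ioc fun T => ?_
  have h_update : LocallyIntegrableOn (Function.update g 0 a) (Set.Ici 0) :=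
    hg.continuousOn_update.locallyIntegrableOn measurableSet_Ici
  exact (integrableOn_Ioc_of_locallyIntegrableOn_Ici h_update T).congr_fun
    (fun x hx => Function.update_of_ne hx.1.ne' a g) measurableSet_Ioc

lemma exists_abs_le (hg : ContinuousWithLimit g a) (T : ℝ) :
    ∃ M, ∀ u ∈ Set.Ioc 0 T, |g u| ≤ M := by
  obtain ⟨M, hM⟩ := (isCompact_Icc (a := 0) (b := T)).exists_bound_of_continuousOn
    (hg.continuousOn_update.mono Set.Icc_subset_Ici_self)
  refine ⟨M, fun u hu => ?_⟩
  simpa only [Function.update_of_ne hu.1.ne', Real.norm_eq_abs] using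
    hM u (Set.Ioc_subset_Icc_self hu)

lemma const_mul (c : ℝ) (hg : ContinuousWithLimit g a) :
    ContinuousWithLimit (fun u => c * g u) (c * a) :=
  ⟨continuousOn_const.mul hg.continuousOn, hg.tendsto.const_mul c⟩

lemma add (hg : ContinuousWithLimit g a) (hh : ContinuousWithLimit h b) :
    ContinuousWithLimit (fun u => g u + h u) (a + b) :=
  ⟨hg.continuousOn.add hh.continuousOn, hg.tendsto.add hh.tendsto⟩

lemma congr (hg : ContinuousWithLimit g a) (hgh : Set.EqOn h g (Set.Ioi 0)) :
    ContinuousWithLimit h a :=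
  ⟨hg.continuousOn.congr hgh, hg.tendsto.congr' hgh.symm.eventuallyEq_nhdsWithin⟩

end ContinuousWithLimit

/-- `p` is, on `(0, ∞)`, the primitive of the locally integrable function `q` with limit `p₀` at
`0⁺`. Local integrability is on `[0, ∞)`, so that `q` may be unbounded but not too singular at
`0`; neither `p 0` nor the values of `p` on the negative half-line matter. -/
structure IsPrimitive (p q : ℝ → ℝ) (p₀ : ℝ) : Prop where
  locallyIntegrableOn : LocallyIntegrableOn q (Set.Ici 0)
  eq_add_integral : ∀ x, 0 < x → p x = p₀ + ∫ t in (0 : ℝ)..x, q t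

namespace IsPrimitive

lemma continuousWithLimit (hp : IsPrimitive p q p₀) : ContinuousWithLimit p p₀ := by
  have h_cont : ContinuousOn (fun x => p₀ + ∫ t in (0 : ℝ)..x, q t) (Set.Ici 0) := by
    intro x hx
    have hx1 : (0 : ℝ) ≤ x + 1 := add_nonneg hx zero_le_one
    have h_nhds : Set.uIcc 0 (x + 1) ∈ 𝓝[Set.Ici 0] x := by
      rw [Set.uIcc_of_le hx1]
      exact inter_mem self_mem_nhdsWithin (mem_nhdsWithin_of_mem_nhds (Iic_mem_nhds (lt_add_one x)))
    exact ((intervalIntegral.continuousOn_primitive_interval'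
      (intervalIntegrable_of_locallyIntegrableOn_Ici hp.locallyIntegrableOn le_rfl hx1)
      Set.left_mem_uIcc).const_add p₀ x (mem_of_mem_nhdsWithin hx h_nhds)).mono_of_mem_nhdsWithin
      h_nhds
  refine .congr ⟨h_cont.mono Set.Ioi_subset_Ici_self, ?_⟩ hp.eq_add_integral
  simpa using ((h_cont 0 Set.self_mem_Ici).mono Set.Ioi_subset_Ici_self).tendsto

lemma hasDerivAt (hp : IsPrimitive p q p₀) (hq : ContinuousOn q (Set.Ioi 0)) {u : ℝ}
    (hu : 0 < u) : HasDerivAt p (q u) u := by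
  have h_nhds : Set.Ioi 0 ∈ 𝓝 u := Ioi_mem_nhds hu
  have h_prim : HasDerivAt (fun x => p₀ + ∫ t in (0 : ℝ)..x, q t) (q u) u :=
    (intervalIntegral.integral_hasDerivAt_right
      (intervalIntegrable_of_locallyIntegrableOn_Ici hp.locallyIntegrableOn le_rfl hu.le)
      (hq.stronglyMeasurableAtFilter isOpen_Ioi u hu) (hq.continuousAt h_nhds)).const_add p₀
  exact h_prim.congr_of_eventuallyEq (eventually_of_mem h_nhds hp.eq_add_integral)

lemma of_hasDerivAt (hq : LocallyIntegrableOn q (Set.Ici 0))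
    (hpq : ∀ u, 0 < u → HasDerivAt p (q u) u) (hp : Tendsto p (𝓝[>] 0) (𝓝 p₀)) :
    IsPrimitive p q p₀ := by
  refine ⟨hq, fun x hx => ?_⟩
  rw [intervalIntegral.integral_eq_sub_of_hasDerivAt_of_tendsto hx
    (fun u hu => hpq u hu.1) (intervalIntegrable_of_locallyIntegrableOn_Ici hq le_rfl hx.le) hp
    ((hpq x hx).continuousAt.tendsto.mono_left nhdsWithin_le_nhds)]
  ring

lemma of_deriv (hp_diff : ∀ u, 0 < u → DifferentiableAt ℝ p u) (hp : Tendsto p (𝓝[>] 0) (𝓝 p₀))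
    (hp' : ContinuousWithLimit (deriv p) a) : IsPrimitive p (deriv p) p₀ :=
  .of_hasDerivAt hp'.locallyIntegrableOn (fun u hu => (hp_diff u hu).hasDerivAt) hp

lemma of_contDiffOn (hp : ContDiffOn ℝ 1 p (Set.Ioi 0))
    (hp₀ : Tendsto p (𝓝[>] 0) (𝓝 p₀)) (hp' : LocallyIntegrableOn (deriv p) (Set.Ici 0)) :
    IsPrimitive p (deriv p) p₀ :=
  .of_hasDerivAt hp' (fun _ hu =>
    ((hp.differentiableOn one_ne_zero).differentiableAt (Ioi_mem_nhds hu)).hasDerivAt) hp₀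

lemma const_mul (c : ℝ) (hp : IsPrimitive p q p₀) :
    IsPrimitive (fun u => c * p u) (fun u => c * q u) (c * p₀) := by
  refine ⟨hp.locallyIntegrableOn.smul c, fun x hx => ?_⟩
  rw [hp.eq_add_integral x hx, intervalIntegral.integral_const_mul, mul_add]

lemma add (hp : IsPrimitive p q p₀) (hr : IsPrimitive r h r₀) :
    IsPrimitive (fun u => p u + r u) (fun u => q u + h u) (p₀ + r₀) := by
  refine ⟨hp.locallyIntegrableOn.add hr.locallyIntegrableOn, fun x hx => ?_⟩
  rw [hp.eq_add_integral x hx, hr.eq_add_integral x hx, intervalIntegral.integral_add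
    (intervalIntegrable_of_locallyIntegrableOn_Ici hp.locallyIntegrableOn le_rfl hx.le)
    (intervalIntegrable_of_locallyIntegrableOn_Ici hr.locallyIntegrableOn le_rfl hx.le)]
  ring

end IsPrimitive

end HalfLine

local notation:67 k:68 "⋆₊" p:68 => posConvolution k p (ContinuousLinearMap.mul ℝ ℝ)

section Convolution

variable {k k' p p' q : ℝ → ℝ} {p₀ u : ℝ}

lemma posConvolution_mul_apply (hu : 0 < u) :
    (k ⋆₊ p) u = ∫ t in (0 : ℝ)..u, k t * p (u - t) := by
  simp only [posConvolution, Set.indicator_of_mem (Set.mem_Ioi.2 hu),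
    ContinuousLinearMap.mul_apply']

lemma posConvolution_mul_comm (k p : ℝ → ℝ) : k ⋆₊ p = p ⋆₊ k := by
  rw [posConvolution_eq_convolution_indicator _ _ _ volume,
    posConvolution_eq_convolution_indicator _ _ _ volume, ← convolution_flip,
    ContinuousLinearMap.flip_mul]

lemma posConvolution_mul_congr (hk : Set.EqOn k k' (Set.Ioo 0 u))
    (hp : Set.EqOn p p' (Set.Ioo 0 u)) : (k ⋆₊ p) u = (k' ⋆₊ p') u := by
  rcases le_or_gt u 0 with hu | hu
  · simp only [posConvolution, Set.indicator_of_notMem (Set.notMem_Ioi.2 hu)]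
  · simp only [posConvolution_mul_apply hu, intervalIntegral.integral_of_le hu.le,
      integral_Ioc_eq_integral_Ioo]
    refine setIntegral_congr_fun measurableSet_Ioo fun t ht => ?_
    exact congrArg₂ _ (hk ht) (hp ⟨sub_pos.2 ht.2, sub_lt_self u ht.1⟩)

lemma posConvolution_mul_eq_setIntegral {S : Set ℝ} (hS : MeasurableSet S) (hu : 0 < u)
    (huS : Set.Ioo 0 u ⊆ S) (hS0 : S ⊆ Set.Ioi 0) :
    (k ⋆₊ p) u = ∫ s in S, k s * (Set.Ioi 0).indicator p (u - s) := by
  rw [posConvolution_mul_apply hu, intervalIntegral.integral_of_le hu.le,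
    integral_Ioc_eq_integral_Ioo,
    setIntegral_eq_of_subset_of_forall_sdiff_eq_zero hS huS fun s hs => ?_]
  · refine setIntegral_congr_fun measurableSet_Ioo fun s hs => ?_
    simp only [Set.indicator_of_mem (Set.mem_Ioi.2 (sub_pos.2 hs.2))]
  · have : u - s ∉ Set.Ioi 0 := fun h => hs.2 ⟨hS0 hs.1, sub_pos.1 h⟩
    rw [Set.indicator_of_notMem this, mul_zero]

lemma integrable_mul_indicator_comp_sub (hk : LocallyIntegrableOn k (Set.Ici 0))
    (hq : LocallyIntegrableOn q (Set.Ici 0)) (u : ℝ) :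
    Integrable (Function.uncurry fun t s => k s * (Set.Ioi 0).indicator q (t - s))
      ((volume.restrict (Set.Ioc 0 u)).prod (volume.restrict (Set.Ioc 0 u))) := by
  have h_trunc {g : ℝ → ℝ} (hg : LocallyIntegrableOn g (Set.Ici 0)) :
      Integrable ((Set.Ioc 0 u).indicator g) :=
    (integrableOn_Ioc_of_locallyIntegrableOn_Ici hg u).integrable_indicator measurableSet_Ioc
  have h_conv := (h_trunc hk).convolution_integrand (ContinuousLinearMap.mul ℝ ℝ) (h_trunc hq)
  rw [Measure.prod_restrict]
  refine (h_conv.integrableOn (s := Set.Ioc 0 u ×ˢ Set.Ioc 0 u)).congr_fun ?_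
    (measurableSet_Ioc.prod measurableSet_Ioc)
  rintro ⟨t, s⟩ ⟨ht, hs⟩
  have h_iff : t - s ∈ Set.Ioc 0 u ↔ t - s ∈ Set.Ioi 0 :=
    ⟨fun h => h.1, fun h => ⟨h, by linarith [ht.2, hs.1]⟩⟩
  simp only [ContinuousLinearMap.mul_apply', Function.uncurry_apply_pair, Set.indicator_of_mem hs,
    Set.indicator_apply, h_iff]

lemma locallyIntegrableOn_posConvolution_mul (hk : LocallyIntegrableOn k (Set.Ici 0))
    (hq : LocallyIntegrableOn q (Set.Ici 0)) : LocallyIntegrableOn (k ⋆₊ q) (Set.Ici 0) := by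
  refine locallyIntegrableOn_Ici_of_integrableOn_Ioc fun T => ?_
  refine IntegrableOn.congr_fun (integrable_mul_indicator_comp_sub hk hq T).integral_prod_left
    (fun u hu => ?_) measurableSet_Ioc
  exact (posConvolution_mul_eq_setIntegral measurableSet_Ioc hu.1
    (fun s hs => ⟨hs.1, hs.2.le.trans hu.2⟩) Set.Ioc_subset_Ioi_self).symm

lemma integral_posConvolution_mul (hk : LocallyIntegrableOn k (Set.Ici 0))
    (hq : LocallyIntegrableOn q (Set.Ici 0)) (hu : 0 < u) :
    ∫ t in (0 : ℝ)..u, (k ⋆₊ q) t = (k ⋆₊ fun x => ∫ t in (0 : ℝ)..x, q t) u := by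
  have h_inner {s : ℝ} (hs : s ∈ Set.Ioc 0 u) :
      ∫ t in Set.Ioc 0 u, (Set.Ioi 0).indicator q (t - s) = ∫ t in (0 : ℝ)..u - s, q t := by
    rw [← intervalIntegral.integral_of_le hu.le, intervalIntegral.integral_comp_sub_right,
      intervalIntegral.integral_of_le (by linarith), setIntegral_indicator measurableSet_Ioi,
      Set.Ioc_inter_Ioi, max_eq_right (by linarith [hs.1]),
      intervalIntegral.integral_of_le (sub_nonneg.2 hs.2)]
  calc ∫ t in (0 : ℝ)..u, (k ⋆₊ q) t
      = ∫ t in Set.Ioc 0 u, ∫ s in Set.Ioc 0 u, k s * (Set.Ioi 0).indicator q (t - s) := by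
        rw [intervalIntegral.integral_of_le hu.le]
        refine setIntegral_congr_fun measurableSet_Ioc fun t ht => ?_
        exact posConvolution_mul_eq_setIntegral measurableSet_Ioc ht.1
          (fun s hs => ⟨hs.1, hs.2.le.trans ht.2⟩) Set.Ioc_subset_Ioi_self
    _ = ∫ s in Set.Ioc 0 u, ∫ t in Set.Ioc 0 u, k s * (Set.Ioi 0).indicator q (t - s) :=
        integral_integral_swap (integrable_mul_indicator_comp_sub hk hq u)
    _ = ∫ s in Set.Ioc 0 u, k s * ∫ t in (0 : ℝ)..u - s, q t := by
        refine setIntegral_congr_fun measurableSet_Ioc fun s hs => ?_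
        simp only [integral_const_mul, h_inner hs]
    _ = (k ⋆₊ fun x => ∫ t in (0 : ℝ)..x, q t) u := by
        rw [posConvolution_mul_apply hu, intervalIntegral.integral_of_le hu.le]

theorem IsPrimitive.posConvolution_mul (hk : LocallyIntegrableOn k (Set.Ici 0))
    (hp : IsPrimitive p q p₀) :
    IsPrimitive (k ⋆₊ p) (fun u => p₀ * k u + (k ⋆₊ q) u) 0 := by
  have hq := hp.locallyIntegrableOn
  refine ⟨(hk.smul p₀).add (locallyIntegrableOn_posConvolution_mul hk hq), fun x hx => ?_⟩
  have hk_int := intervalIntegrable_of_locallyIntegrableOn_Ici hk le_rfl hx.le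
  have hkq_int := intervalIntegrable_of_locallyIntegrableOn_Ici
    (locallyIntegrableOn_posConvolution_mul hk hq) le_rfl hx.le
  have h_cont : ContinuousOn (fun s => ∫ t in (0 : ℝ)..x - s, q t) (Set.uIcc 0 x) := by
    refine (intervalIntegral.continuousOn_primitive_interval'
      (intervalIntegrable_of_locallyIntegrableOn_Ici hq le_rfl hx.le) Set.left_mem_uIcc).comp
      (by fun_prop) fun s hs => ?_
    rw [Set.uIcc_of_le hx.le] at hs ⊢
    exact ⟨sub_nonneg.2 hs.2, sub_le_self x hs.1⟩
  calc (k ⋆₊ p) x = (k ⋆₊ fun y => p₀ + ∫ t in (0 : ℝ)..y, q t) x :=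
        posConvolution_mul_congr (Set.eqOn_refl k _) fun y hy => hp.eq_add_integral y hy.1
    _ = ∫ s in (0 : ℝ)..x, (p₀ * k s + k s * ∫ t in (0 : ℝ)..x - s, q t) := by
        rw [posConvolution_mul_apply hx]
        exact intervalIntegral.integral_congr fun s _ => by ring
    _ = (∫ s in (0 : ℝ)..x, p₀ * k s) + ∫ t in (0 : ℝ)..x, (k ⋆₊ q) t := by
        rw [intervalIntegral.integral_add (hk_int.const_mul p₀) (hk_int.mul_continuousOn h_cont),
          integral_posConvolution_mul hk hq hx, posConvolution_mul_apply hx]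
    _ = 0 + ∫ t in (0 : ℝ)..x, (p₀ * k t + (k ⋆₊ q) t) := by
        rw [zero_add, intervalIntegral.integral_add (hk_int.const_mul p₀) hkq_int]

end Convolution

lemma contDiffOn_add_one_of_deriv {n : ℕ} {g : ℝ → ℝ} {s : Set ℝ} (hs : IsOpen s)
    (hg : DifferentiableOn ℝ g s) (hg' : ContDiffOn ℝ n (deriv g) s) :
    ContDiffOn ℝ (n + 1 : ℕ) g s :=
  (contDiffOn_succ_iff_deriv_of_isOpen hs).2 ⟨hg, by simp, hg'⟩

lemma differentiableAt_deriv_of_contDiffOn_two {g : ℝ → ℝ} {s : Set ℝ} (hs : IsOpen s)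
    (hg : ContDiffOn ℝ 2 g s) {u : ℝ} (hu : u ∈ s) : DifferentiableAt ℝ (deriv g) u :=
  ((hg.deriv_of_isOpen hs (m := 1) le_rfl).differentiableOn one_ne_zero).differentiableAt
    (hs.mem_nhds hu)

/-- `g` solves the renewal equation with kernel `φ f` and forcing term `w` on `(0, ∞)`; the values
of `f`, `g`, `w` elsewhere are irrelevant. -/
def SolvesRenewal (φ : ℝ) (f w g : ℝ → ℝ) : Prop :=
  ∀ u, 0 < u → g u = φ * (f ⋆₊ g) u + w u

lemma solvesRenewal_iff {φ : ℝ} {f w g : ℝ → ℝ} : SolvesRenewal φ f w g ↔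
    ∀ u, 0 < u → g u = φ * (∫ y in (0 : ℝ)..u, g (u - y) * f y) + w u := by
  refine forall₂_congr fun u hu => ?_
  simp only [posConvolution_mul_apply hu, mul_comm (f _)]

namespace SolvesRenewal

variable {φ : ℝ} {f w g : ℝ → ℝ}

lemma aemeasurable (hg : SolvesRenewal φ f w g) (hf : ContinuousOn f (Set.Ioi 0))
    (hw : ContinuousOn w (Set.Ioi 0)) : AEMeasurable g (volume.restrict (Set.Ioi 0)) := by
  set K : ℝ → ℝ → ℝ := fun u s => (Set.Ioi 0).indicator f (u - s)
  have hf_ind : Measurable ((Set.Ioi 0).indicator f) := by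
    rw [← Set.piecewise_eq_indicator]
    exact hf.measurable_piecewise continuousOn_const measurableSet_Ioi
  have hf_support : IsOpen (Function.support ((Set.Ioi 0).indicator f)) := by
    rw [Set.support_indicator]
    exact hf.isOpen_inter_preimage isOpen_Ioi isOpen_compl_singleton
  have h_conv : Measurable fun u => ∫ s in Set.Ioi 0, g s * K u s :=
    measurable_integral_mul_of_isOpen_support g (hf_ind.comp measurable_sub)
      (hf_support.preimage continuous_sub)
  refine ((h_conv.const_mul φ).aemeasurable.add (hw.aemeasurable measurableSet_Ioi)).congr ?_
  filter_upwards [ae_restrict_mem measurableSet_Ioi] with u hu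
  rw [hg u hu, posConvolution_mul_comm,
    posConvolution_mul_eq_setIntegral measurableSet_Ioi hu Set.Ioo_subset_Ioi_self subset_rfl]
  rfl

lemma locallyIntegrableOn (hg : SolvesRenewal φ f w g) (hf : ContinuousOn f (Set.Ioi 0))
    (hw : ContinuousOn w (Set.Ioi 0)) (hg_bdd : ∀ T, 0 < T → ∃ M, ∀ u ∈ Set.Icc 0 T, |g u| ≤ M) :
    LocallyIntegrableOn g (Set.Ici 0) := by
  refine locallyIntegrableOn_Ici_of_integrableOn_Ioc fun T => ?_
  obtain ⟨M, hM⟩ := hg_bdd (max T 1) (lt_max_of_lt_right one_pos)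
  refine Integrable.of_bound (C := M)
    ((hg.aemeasurable hf hw).mono_set Set.Ioc_subset_Ioi_self).aestronglyMeasurable ?_
  filter_upwards [ae_restrict_mem measurableSet_Ioc] with u hu
  exact hM u ⟨hu.1.le, hu.2.trans (le_max_left T 1)⟩

end SolvesRenewal

/-- A renewal equation regular enough to be differentiated: the kernel density is `C¹₀` with an
absolutely continuous derivative, the forcing term is `C¹₀`, and the solution is locally
integrable. The parameters `f₀`, `f'₀`, `w₀`, `w'₀` are the limits of `f`, `f'`, `w`, `w'` at
`0⁺`. -/
structure RegularRenewal (φ : ℝ) (f w g : ℝ → ℝ) (f₀ f'₀ w₀ w'₀ : ℝ) : Prop where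
  solvesRenewal : SolvesRenewal φ f w g
  locallyIntegrableOn : LocallyIntegrableOn g (Set.Ici 0)
  kernel : IsPrimitive f (deriv f) f₀
  kernel_deriv : IsPrimitive (deriv f) (deriv (deriv f)) f'₀
  forcing : IsPrimitive w (deriv w) w₀
  forcing_deriv : ContinuousWithLimit (deriv w) w'₀

namespace RegularRenewal

variable {φ f₀ f'₀ w₀ w'₀ w''₀ u : ℝ} {f w g : ℝ → ℝ}

lemma of_contDiffOn (hg : SolvesRenewal φ f w g)
    (hg_bdd : ∀ T, 0 < T → ∃ M, ∀ u ∈ Set.Icc 0 T, |g u| ≤ M)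
    (hf : ContDiffOn ℝ 2 f (Set.Ioi 0)) (hf₀ : Tendsto f (𝓝[>] 0) (𝓝 f₀))
    (hf'₀ : Tendsto (deriv f) (𝓝[>] 0) (𝓝 f'₀))
    (hf'' : IntegrableOn (fun y => |deriv (deriv f) y|) (Set.Ioi 0))
    (hw : ContDiffOn ℝ 1 w (Set.Ioi 0)) (hw₀ : Tendsto w (𝓝[>] 0) (𝓝 w₀))
    (hw'₀ : Tendsto (deriv w) (𝓝[>] 0) (𝓝 w'₀)) :
    RegularRenewal φ f w g f₀ f'₀ w₀ w'₀ := by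
  have hf' : ContDiffOn ℝ 1 (deriv f) (Set.Ioi 0) := hf.deriv_of_isOpen isOpen_Ioi le_rfl
  have hf'_limit : ContinuousWithLimit (deriv f) f'₀ := ⟨hf'.continuousOn, hf'₀⟩
  have hf''_cont : ContinuousOn (deriv (deriv f)) (Set.Ioi 0) :=
    hf'.continuousOn_deriv_of_isOpen isOpen_Ioi le_rfl
  have hf''_int : IntegrableOn (deriv (deriv f)) (Set.Ioi 0) :=
    (integrable_norm_iff (hf''_cont.aestronglyMeasurable measurableSet_Ioi)).1 hf''
  have hw'_limit : ContinuousWithLimit (deriv w) w'₀ :=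
    ⟨hw.continuousOn_deriv_of_isOpen isOpen_Ioi le_rfl, hw'₀⟩
  exact
    { solvesRenewal := hg
      locallyIntegrableOn := hg.locallyIntegrableOn hf.continuousOn hw.continuousOn hg_bdd
      kernel := .of_contDiffOn (hf.of_le one_le_two) hf₀ hf'_limit.locallyIntegrableOn
      kernel_deriv := .of_contDiffOn hf' hf'₀ (locallyIntegrableOn_Ici_of_integrableOn_Ioc
        fun T => hf''_int.mono_set Set.Ioc_subset_Ioi_self)
      forcing := .of_contDiffOn hw hw₀ hw'_limit.locallyIntegrableOn
      forcing_deriv := hw'_limit }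

lemma isPrimitive (h : RegularRenewal φ f w g f₀ f'₀ w₀ w'₀) :
    IsPrimitive g (fun u => φ * (f₀ * g u + (g ⋆₊ deriv f) u) + deriv w u) w₀ := by
  have h_rhs := ((h.kernel.posConvolution_mul h.locallyIntegrableOn).const_mul φ).add h.forcing
  rw [mul_zero, zero_add] at h_rhs
  refine ⟨h_rhs.locallyIntegrableOn, fun u hu => ?_⟩
  rw [h.solvesRenewal u hu, posConvolution_mul_comm, h_rhs.eq_add_integral u hu]

lemma continuousWithLimit_deriv_formula (h : RegularRenewal φ f w g f₀ f'₀ w₀ w'₀) :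
    ContinuousWithLimit (fun u => φ * (f₀ * g u + (g ⋆₊ deriv f) u) + deriv w u)
      (φ * (f₀ * w₀ + 0) + w'₀) :=
  (((h.isPrimitive.continuousWithLimit.const_mul f₀).add
    (h.kernel_deriv.posConvolution_mul h.locallyIntegrableOn).continuousWithLimit).const_mul
      φ).add h.forcing_deriv

lemma hasDerivAt (h : RegularRenewal φ f w g f₀ f'₀ w₀ w'₀) (hu : 0 < u) :
    HasDerivAt g (φ * (f₀ * g u + (g ⋆₊ deriv f) u) + deriv w u) u :=
  h.isPrimitive.hasDerivAt h.continuousWithLimit_deriv_formula.continuousOn hu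

lemma continuousWithLimit_deriv (h : RegularRenewal φ f w g f₀ f'₀ w₀ w'₀) :
    ContinuousWithLimit (deriv g) (φ * w₀ * f₀ + w'₀) := by
  convert h.continuousWithLimit_deriv_formula.congr fun u hu => (h.hasDerivAt hu).deriv using 1
  ring

lemma isPrimitive_deriv (h : RegularRenewal φ f w g f₀ f'₀ w₀ w'₀) : IsPrimitive g (deriv g) w₀ :=
  .of_deriv (fun _ hu => (h.hasDerivAt hu).differentiableAt)
    h.isPrimitive.continuousWithLimit.tendsto h.continuousWithLimit_deriv

theorem solvesRenewal_deriv (h : RegularRenewal φ f w g f₀ f'₀ w₀ w'₀) :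
    SolvesRenewal φ f (fun u => φ * w₀ * f u + deriv w u) (deriv g) := by
  intro u hu
  have h_conv : IsPrimitive (f ⋆₊ g) (fun u => w₀ * f u + (f ⋆₊ deriv g) u) 0 :=
    h.isPrimitive_deriv.posConvolution_mul h.kernel.continuousWithLimit.locallyIntegrableOn
  have h_cont : ContinuousOn (fun u => w₀ * f u + (f ⋆₊ deriv g) u) (Set.Ioi 0) := by
    rw [posConvolution_mul_comm]
    exact ((h.kernel.continuousWithLimit.const_mul w₀).add (h.kernel.posConvolution_mul
      h.continuousWithLimit_deriv.locallyIntegrableOn).continuousWithLimit).continuousOn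
  have h_rhs := ((h_conv.hasDerivAt h_cont hu).const_mul φ).add
    (h.forcing.hasDerivAt h.forcing_deriv.continuousOn hu)
  have h_eq : g =ᶠ[𝓝 u] fun x => φ * (f ⋆₊ g) x + w x :=
    eventually_of_mem (Ioi_mem_nhds hu) h.solvesRenewal
  rw [(h_rhs.congr_of_eventuallyEq h_eq).deriv]
  ring

protected theorem deriv (h : RegularRenewal φ f w g f₀ f'₀ w₀ w'₀)
    (hw : ContDiffOn ℝ 2 w (Set.Ioi 0)) (hw''₀ : Tendsto (deriv (deriv w)) (𝓝[>] 0) (𝓝 w''₀)) :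
    RegularRenewal φ f (fun u => φ * w₀ * f u + deriv w u) (deriv g) f₀ f'₀
      (φ * w₀ * f₀ + w'₀) (φ * w₀ * f'₀ + w''₀) := by
  have hw'_cont : ContinuousOn (deriv (deriv w)) (Set.Ioi 0) :=
    (hw.deriv_of_isOpen isOpen_Ioi (m := 1) le_rfl).continuousOn_deriv_of_isOpen isOpen_Ioi le_rfl
  have h_deriv (u : ℝ) (hu : 0 < u) := ((h.kernel.hasDerivAt
    h.kernel_deriv.continuousWithLimit.continuousOn hu).const_mul (φ * w₀)).add
    (differentiableAt_deriv_of_contDiffOn_two isOpen_Ioi hw hu).hasDerivAt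
  have h_cont := ((h.kernel_deriv.continuousWithLimit.const_mul (φ * w₀)).add
    ⟨hw'_cont, hw''₀⟩).congr fun u hu => (h_deriv u hu).deriv
  exact
    { solvesRenewal := h.solvesRenewal_deriv
      locallyIntegrableOn := h.continuousWithLimit_deriv.locallyIntegrableOn
      kernel := h.kernel
      kernel_deriv := h.kernel_deriv
      forcing := .of_deriv (fun u hu => (h_deriv u hu).differentiableAt)
        ((h.kernel.continuousWithLimit.const_mul _).add h.forcing_deriv).tendsto h_cont
      forcing_deriv := h_cont }

lemma isPrimitive_posConvolution_deriv (h : RegularRenewal φ f w g f₀ f'₀ w₀ w'₀) :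
    IsPrimitive (g ⋆₊ deriv f) (fun u => f'₀ * g u + (g ⋆₊ deriv (deriv f)) u) 0 :=
  h.kernel_deriv.posConvolution_mul h.locallyIntegrableOn

lemma continuousOn_deriv_posConvolution (h : RegularRenewal φ f w g f₀ f'₀ w₀ w'₀) :
    ContinuousOn (fun u => f'₀ * g u + (g ⋆₊ deriv (deriv f)) u) (Set.Ioi 0) := by
  rw [posConvolution_mul_comm]
  exact ((h.isPrimitive.continuousWithLimit.const_mul f'₀).add
    (h.isPrimitive_deriv.posConvolution_mul
      h.kernel_deriv.locallyIntegrableOn).continuousWithLimit).continuousOn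

lemma hasDerivAt_deriv (h : RegularRenewal φ f w g f₀ f'₀ w₀ w'₀) (hu : 0 < u)
    (hw : DifferentiableAt ℝ (deriv w) u) :
    HasDerivAt (deriv g) (φ * (f₀ * deriv g u + (f'₀ * g u + (g ⋆₊ deriv (deriv f)) u))
      + deriv (deriv w) u) u := by
  have h_rhs := ((((h.hasDerivAt hu).differentiableAt.hasDerivAt.const_mul f₀).add
    (h.isPrimitive_posConvolution_deriv.hasDerivAt
      h.continuousOn_deriv_posConvolution hu)).const_mul φ).add hw.hasDerivAt
  exact h_rhs.congr_of_eventuallyEq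
    (eventually_of_mem (Ioi_mem_nhds hu) fun x hx => (h.hasDerivAt hx).deriv)

theorem contDiffOn_two (h : RegularRenewal φ f w g f₀ f'₀ w₀ w'₀)
    (hw : ContDiffOn ℝ 2 w (Set.Ioi 0)) : ContDiffOn ℝ 2 g (Set.Ioi 0) := by
  have hw' : ContDiffOn ℝ 1 (deriv w) (Set.Ioi 0) := hw.deriv_of_isOpen isOpen_Ioi le_rfl
  have hw'_diff (u : ℝ) (hu : u ∈ Set.Ioi 0) : DifferentiableAt ℝ (deriv w) u :=
    differentiableAt_deriv_of_contDiffOn_two isOpen_Ioi hw hu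
  have h_cont : ContinuousOn (deriv (deriv g)) (Set.Ioi 0) := by
    refine ContinuousOn.congr ?_ fun u hu => (h.hasDerivAt_deriv hu (hw'_diff u hu)).deriv
    have hg'_cont := h.continuousWithLimit_deriv.continuousOn
    exact (continuousOn_const.mul ((continuousOn_const.mul hg'_cont).add
      h.continuousOn_deriv_posConvolution)).add (hw'.continuousOn_deriv_of_isOpen isOpen_Ioi le_rfl)
  have hg' : ContDiffOn ℝ 1 (deriv g) (Set.Ioi 0) :=
    contDiffOn_add_one_of_deriv (n := 0) isOpen_Ioi (fun u hu =>
      (h.hasDerivAt_deriv hu (hw'_diff u hu)).differentiableAt.differentiableWithinAt)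
      (contDiffOn_zero.2 h_cont)
  exact contDiffOn_add_one_of_deriv (n := 1) isOpen_Ioi
    (fun u hu => (h.hasDerivAt hu).differentiableAt.differentiableWithinAt) hg'

end RegularRenewal

/-- The absolute moment `I_n(p) = ∫₀^∞ yⁿ |p(y)| dy`, as an extended nonnegative real. -/
noncomputable def halfLineMoment (n : ℕ) (p : ℝ → ℝ) : ℝ≥0∞ :=
  ∫⁻ y in Set.Ioi 0, ‖y ^ n * p y‖ₑ

/-- The weighted sup norm `sup_{u ∈ s} |uⁿ g(u)|`, as an extended nonnegative real. -/
noncomputable def weightedSup (s : Set ℝ) (n : ℕ) (g : ℝ → ℝ) : ℝ≥0∞ :=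
  ⨆ u ∈ s, ‖u ^ n * g u‖ₑ

section Weights

variable {g p : ℝ → ℝ} {s t : Set ℝ} {n i : ℕ} {a u : ℝ}

lemma enorm_pow_mul_le_weightedSup (hu : u ∈ s) : ‖u ^ n * g u‖ₑ ≤ weightedSup s n g :=
  le_iSup₂ (f := fun u _ => ‖u ^ n * g u‖ₑ) u hu

lemma weightedSup_mono (hst : s ⊆ t) : weightedSup s n g ≤ weightedSup t n g :=
  biSup_mono hst

lemma weightedSup_lt_top_iff : weightedSup s n g < ⊤ ↔ ∃ M, ∀ u ∈ s, |u ^ n * g u| ≤ M := by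
  constructor
  · intro h
    refine ⟨(weightedSup s n g).toReal, fun u hu => ?_⟩
    have := ENNReal.toReal_mono h.ne (enorm_pow_mul_le_weightedSup (n := n) (g := g) hu)
    rwa [toReal_enorm] at this
  · rintro ⟨M, hM⟩
    refine (iSup₂_le fun u hu => ?_).trans_lt (ENNReal.ofReal_lt_top (r := M))
    rw [Real.enorm_eq_ofReal_abs]
    exact ENNReal.ofReal_le_ofReal (hM u hu)

lemma weightedSup_Ioc_lt_top {T : ℝ} (hg : ∃ M, ∀ u ∈ Set.Ioc 0 T, |g u| ≤ M) (n : ℕ) :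
    weightedSup (Set.Ioc 0 T) n g < ⊤ := by
  obtain ⟨M, hM⟩ := hg
  refine weightedSup_lt_top_iff.2 ⟨T ^ n * M, fun u hu => ?_⟩
  rw [abs_mul, abs_of_nonneg (pow_nonneg hu.1.le n)]
  exact mul_le_mul (pow_le_pow_left₀ hu.1.le hu.2 n) (hM u hu) (abs_nonneg _)
    (pow_nonneg (hu.1.le.trans hu.2) n)

lemma ContinuousWithLimit.weightedSup_lt_top_of_le (hg : ContinuousWithLimit g a)
    (hn : weightedSup (Set.Ioi 0) n g < ⊤) (hin : i ≤ n) : weightedSup (Set.Ioi 0) i g < ⊤ := by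
  have h_Ioc := weightedSup_Ioc_lt_top (hg.exists_abs_le 1) i
  refine (iSup₂_le fun u hu => ?_).trans_lt (ENNReal.add_lt_top.2 ⟨h_Ioc, hn⟩)
  rcases le_total u 1 with hu1 | hu1
  · exact (enorm_pow_mul_le_weightedSup (Set.mem_Ioc.2 ⟨hu, hu1⟩)).trans le_self_add
  · refine le_add_left (le_trans ?_ (enorm_pow_mul_le_weightedSup hu))
    simp only [enorm_mul, enorm_pow]
    gcongr
    rwa [Real.enorm_of_nonneg (zero_le_one.trans hu1), ENNReal.one_le_ofReal]

lemma halfLineMoment_abs (n : ℕ) (p : ℝ → ℝ) :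
    halfLineMoment n (fun y => |p y|) = halfLineMoment n p := by
  simp only [halfLineMoment, enorm_mul, Real.enorm_abs]

lemma halfLineMoment_zero_lt_top (hp : IntegrableOn p (Set.Ioi 0)) : halfLineMoment 0 p < ⊤ := by
  simp only [halfLineMoment, pow_zero, one_mul]
  exact hp.2

lemma halfLineMoment_lt_top_of_le (hp : AEMeasurable p (volume.restrict (Set.Ioi 0)))
    (h0 : halfLineMoment 0 p < ⊤) (hn : halfLineMoment n p < ⊤) (hin : i ≤ n) :
    halfLineMoment i p < ⊤ := by
  refine lt_of_le_of_lt ?_ (ENNReal.add_lt_top.2 ⟨h0, hn⟩)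
  rw [halfLineMoment, halfLineMoment, halfLineMoment, ← lintegral_add_left' (by fun_prop)]
  refine setLIntegral_mono' measurableSet_Ioi fun y hy => ?_
  have hy0 : 0 ≤ y := le_of_lt hy
  have h_pow : y ^ i ≤ 1 + y ^ n := by
    rcases le_total y 1 with hy1 | hy1
    · exact (pow_le_one₀ hy0 hy1).trans (le_add_of_nonneg_right (pow_nonneg hy0 n))
    · exact (pow_le_pow_right₀ hy1 hin).trans (le_add_of_nonneg_left zero_le_one)
  rw [enorm_mul, enorm_mul, enorm_mul, ← add_mul, pow_zero]
  gcongr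
  rw [Real.enorm_of_nonneg (pow_nonneg hy0 i), Real.enorm_of_nonneg (pow_nonneg hy0 n), enorm_one,
    ← ENNReal.ofReal_one, ← ENNReal.ofReal_add zero_le_one (pow_nonneg hy0 n)]
  exact ENNReal.ofReal_le_ofReal h_pow

lemma ofReal_setIntegral_pow_mul_abs (hp : AEMeasurable p (volume.restrict (Set.Ioi 0)))
    (hn : halfLineMoment n p < ⊤) :
    ENNReal.ofReal (∫ y in Set.Ioi 0, y ^ n * |p y|) = halfLineMoment n p := by
  have h_int : IntegrableOn (fun y => y ^ n * p y) (Set.Ioi 0) := ⟨by fun_prop, hn⟩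
  rw [halfLineMoment, ← ofReal_integral_norm_eq_lintegral_enorm h_int]
  congr 1
  refine setIntegral_congr_fun measurableSet_Ioi fun y hy => ?_
  rw [norm_mul, Real.norm_of_nonneg (pow_nonneg (le_of_lt hy) n), Real.norm_eq_abs]

lemma enorm_mul_halfLineMoment_zero (hp : IntegrableOn p (Set.Ioi 0)) (φ : ℝ) :
    ‖φ‖ₑ * halfLineMoment 0 p = ENNReal.ofReal (|φ| * ∫ y in Set.Ioi 0, |p y|) := by
  have h_moment : halfLineMoment 0 p < ⊤ := halfLineMoment_zero_lt_top hp
  have h_eq := ofReal_setIntegral_pow_mul_abs hp.1.aemeasurable h_moment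
  simp only [pow_zero, one_mul] at h_eq
  rw [ENNReal.ofReal_mul (abs_nonneg φ), h_eq, Real.enorm_eq_ofReal_abs]

lemma enorm_pow_mul_posConvolution_le (hp : AEMeasurable p (volume.restrict (Set.Ioi 0)))
    (hu : 0 < u) (n : ℕ) (g : ℝ → ℝ) :
    ‖u ^ n * (p ⋆₊ g) u‖ₑ ≤ ∑ i ∈ Finset.range (n + 1),
      n.choose i * weightedSup (Set.Ioo 0 u) (n - i) g * halfLineMoment i p := by
  have h_pointwise {y : ℝ} (hy : y ∈ Set.Ioo 0 u) : ‖u ^ n * (p y * g (u - y))‖ₑ ≤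
      ∑ i ∈ Finset.range (n + 1),
        n.choose i * weightedSup (Set.Ioo 0 u) (n - i) g * ‖y ^ i * p y‖ₑ := by
    have hy' : u - y ∈ Set.Ioo 0 u := ⟨sub_pos.2 hy.2, sub_lt_self u hy.1⟩
    calc ‖u ^ n * (p y * g (u - y))‖ₑ
        = ‖∑ i ∈ Finset.range (n + 1),
            n.choose i * ((u - y) ^ (n - i) * g (u - y)) * (y ^ i * p y)‖ₑ := by
          nth_rw 1 [← add_sub_cancel y u]
          rw [add_pow, Finset.sum_mul]
          congr 1
          exact Finset.sum_congr rfl fun i _ => by ring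
      _ ≤ ∑ i ∈ Finset.range (n + 1),
            ‖n.choose i * ((u - y) ^ (n - i) * g (u - y)) * (y ^ i * p y)‖ₑ := enorm_sum_le _ _
      _ ≤ _ := by
          refine Finset.sum_le_sum fun i _ => ?_
          rw [enorm_mul, enorm_mul, Real.enorm_natCast]
          gcongr
          exact enorm_pow_mul_le_weightedSup hy'
  calc ‖u ^ n * (p ⋆₊ g) u‖ₑ = ‖∫ y in Set.Ioo 0 u, u ^ n * (p y * g (u - y))‖ₑ := by
        rw [posConvolution_mul_apply hu, intervalIntegral.integral_of_le hu.le,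
          integral_Ioc_eq_integral_Ioo, integral_const_mul]
    _ ≤ ∫⁻ y in Set.Ioo 0 u, ‖u ^ n * (p y * g (u - y))‖ₑ := enorm_integral_le_lintegral_enorm _
    _ ≤ ∫⁻ y in Set.Ioo 0 u, ∑ i ∈ Finset.range (n + 1),
          n.choose i * weightedSup (Set.Ioo 0 u) (n - i) g * ‖y ^ i * p y‖ₑ :=
        setLIntegral_mono' measurableSet_Ioo fun y hy => h_pointwise hy
    _ ≤ ∫⁻ y in Set.Ioi 0, ∑ i ∈ Finset.range (n + 1),
          n.choose i * weightedSup (Set.Ioo 0 u) (n - i) g * ‖y ^ i * p y‖ₑ :=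
        lintegral_mono_set Set.Ioo_subset_Ioi_self
    _ = ∑ i ∈ Finset.range (n + 1),
          n.choose i * weightedSup (Set.Ioo 0 u) (n - i) g * halfLineMoment i p := by
        rw [lintegral_finsetSum' _ (fun i _ => by fun_prop)]
        exact Finset.sum_congr rfl fun i _ => lintegral_const_mul'' _ (by fun_prop)

end Weights

section Estimates

variable {φ f₀ f'₀ w₀ w'₀ : ℝ} {f w g : ℝ → ℝ} {n i : ℕ}

lemma le_div_one_sub_of_le_mul_add {θ S C : ℝ≥0∞} (hθ : θ < 1) (hS : S ≠ ⊤) (h : S ≤ θ * S + C) :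
    S ≤ C / (1 - θ) := by
  rw [ENNReal.le_div_iff_mul_le (.inl (tsub_pos_of_lt hθ).ne') (.inl (by simp)), mul_comm,
    ENNReal.sub_mul fun _ _ => hS, one_mul, tsub_le_iff_left]
  exact h

lemma SolvesRenewal.weightedSup_Ioc_le (hg : SolvesRenewal φ f w g)
    (hf : AEMeasurable f (volume.restrict (Set.Ioi 0))) (n : ℕ) (T : ℝ) :
    weightedSup (Set.Ioc 0 T) n g ≤
      ‖φ‖ₑ * halfLineMoment 0 f * weightedSup (Set.Ioc 0 T) n g +
        (‖φ‖ₑ * ∑ i ∈ Finset.range n, n.choose (i + 1) *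
            weightedSup (Set.Ioi 0) (n - (i + 1)) g * halfLineMoment (i + 1) f +
          weightedSup (Set.Ioi 0) n w) := by
  refine iSup₂_le fun u hu => ?_
  have h_conv : ‖u ^ n * (f ⋆₊ g) u‖ₑ ≤
      ∑ i ∈ Finset.range n, n.choose (i + 1) * weightedSup (Set.Ioi 0) (n - (i + 1)) g *
        halfLineMoment (i + 1) f + weightedSup (Set.Ioc 0 T) n g * halfLineMoment 0 f := by
    refine (enorm_pow_mul_posConvolution_le hf hu.1 n g).trans ?_
    rw [Finset.sum_range_succ', Nat.choose_zero_right, Nat.cast_one, one_mul, Nat.sub_zero]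
    gcongr with i
    · exact weightedSup_mono Set.Ioo_subset_Ioi_self
    · exact weightedSup_mono (Set.Ioo_subset_Ioc_self.trans (Set.Ioc_subset_Ioc_right hu.2))
  calc ‖u ^ n * g u‖ₑ = ‖φ * (u ^ n * (f ⋆₊ g) u) + u ^ n * w u‖ₑ := by
        rw [hg u hu.1]
        ring_nf
    _ ≤ ‖φ‖ₑ * ‖u ^ n * (f ⋆₊ g) u‖ₑ + ‖u ^ n * w u‖ₑ :=
        (enorm_add_le _ _).trans_eq (by rw [enorm_mul])
    _ ≤ ‖φ‖ₑ * (∑ i ∈ Finset.range n, n.choose (i + 1) *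
          weightedSup (Set.Ioi 0) (n - (i + 1)) g * halfLineMoment (i + 1) f +
            weightedSup (Set.Ioc 0 T) n g * halfLineMoment 0 f) + weightedSup (Set.Ioi 0) n w := by
        have h_forcing : ‖u ^ n * w u‖ₑ ≤ weightedSup (Set.Ioi 0) n w :=
          enorm_pow_mul_le_weightedSup (Set.mem_Ioi.2 hu.1)
        gcongr
    _ = _ := by ring

theorem SolvesRenewal.weightedSup_lt_top (hg : SolvesRenewal φ f w g)
    (hf : AEMeasurable f (volume.restrict (Set.Ioi 0))) (hφ : ‖φ‖ₑ * halfLineMoment 0 f < 1)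
    (hf_moment : ∀ i ≤ n, halfLineMoment i f < ⊤)
    (hg_bdd : ∀ T, ∃ M, ∀ u ∈ Set.Ioc 0 T, |g u| ≤ M)
    (hw : ∀ i ≤ n, weightedSup (Set.Ioi 0) i w < ⊤) : weightedSup (Set.Ioi 0) n g < ⊤ := by
  induction n using Nat.strong_induction_on with
  | h n ih =>
    set C : ℝ≥0∞ := ‖φ‖ₑ * ∑ i ∈ Finset.range n, n.choose (i + 1) *
      weightedSup (Set.Ioi 0) (n - (i + 1)) g * halfLineMoment (i + 1) f +
        weightedSup (Set.Ioi 0) n w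
    have hC : C < ⊤ := by
      refine ENNReal.add_lt_top.2 ⟨ENNReal.mul_lt_top enorm_lt_top
        (ENNReal.sum_lt_top.2 fun i hi => ?_), hw n le_rfl⟩
      have hin : i + 1 ≤ n := Finset.mem_range.1 hi
      exact ENNReal.mul_lt_top (ENNReal.mul_lt_top (ENNReal.natCast_lt_top _)
        (ih (n - (i + 1)) (by omega) (fun j hj => hf_moment j (by omega))
          fun j hj => hw j (by omega))) (hf_moment (i + 1) hin)
    refine lt_of_le_of_lt (iSup₂_le fun u hu => ?_)
      (ENNReal.div_lt_top hC.ne (tsub_pos_of_lt hφ).ne')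
    exact (enorm_pow_mul_le_weightedSup (Set.mem_Ioc.2 ⟨hu, le_rfl⟩)).trans
      (le_div_one_sub_of_le_mul_add hφ (weightedSup_Ioc_lt_top (hg_bdd u) n).ne
        (hg.weightedSup_Ioc_le hf n u))

theorem RegularRenewal.weightedSup_deriv_lt_top (h : RegularRenewal φ f w g f₀ f'₀ w₀ w'₀)
    (hφ : ‖φ‖ₑ * halfLineMoment 0 f < 1) (hf_zero : halfLineMoment 0 f < ⊤)
    (hf_moment : halfLineMoment n f < ⊤)
    (hw : weightedSup (Set.Ioi 0) n (fun u => φ * w₀ * f u + deriv w u) < ⊤) (hin : i ≤ n) :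
    weightedSup (Set.Ioi 0) i (deriv g) < ⊤ := by
  have hf_meas : AEMeasurable f (volume.restrict (Set.Ioi 0)) :=
    h.kernel.continuousWithLimit.continuousOn.aemeasurable measurableSet_Ioi
  exact h.solvesRenewal_deriv.weightedSup_lt_top hf_meas hφ
    (fun j hj => halfLineMoment_lt_top_of_le hf_meas hf_zero hf_moment (hj.trans hin))
    h.continuousWithLimit_deriv.exists_abs_le
    fun j hj => ((h.kernel.continuousWithLimit.const_mul _).add
      h.forcing_deriv).weightedSup_lt_top_of_le hw (hj.trans hin)

lemma RegularRenewal.aemeasurable_kernel_deriv_deriv (h : RegularRenewal φ f w g f₀ f'₀ w₀ w'₀) :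
    AEMeasurable (deriv (deriv f)) (volume.restrict (Set.Ioi 0)) :=
  (h.kernel_deriv.locallyIntegrableOn.mono_set
    Set.Ioi_subset_Ici_self).aestronglyMeasurable.aemeasurable

/-- The bound obtained for `sup_{u > 0} |uⁿ g''(u)|` when `g` solves the renewal equation with
kernel `φ f` and forcing term `w`, and `f₀`, `f'₀` are the limits of `f`, `f'` at `0⁺`; the theorem
is the case `n = 2` with `m'` in place of `g`. -/
noncomputable def secondDerivBound (φ : ℝ) (f w g : ℝ → ℝ) (f₀ f'₀ : ℝ) (n : ℕ) : ℝ≥0∞ :=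
  ‖φ‖ₑ * (‖f'₀‖ₑ * weightedSup (Set.Ioi 0) n g + ∑ i ∈ Finset.range (n + 1),
      n.choose i * weightedSup (Set.Ioi 0) (n - i) g * halfLineMoment i (deriv (deriv f))) +
    ‖φ * f₀‖ₑ * weightedSup (Set.Ioi 0) n (deriv g) + weightedSup (Set.Ioi 0) n (deriv (deriv w))

theorem RegularRenewal.weightedSup_deriv_deriv_le (h : RegularRenewal φ f w g f₀ f'₀ w₀ w'₀)
    (hw : ∀ u, 0 < u → DifferentiableAt ℝ (deriv w) u) (n : ℕ) :
    weightedSup (Set.Ioi 0) n (deriv (deriv g)) ≤ secondDerivBound φ f w g f₀ f'₀ n := by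
  refine iSup₂_le fun u hu => ?_
  have hf''_meas : AEMeasurable (deriv (deriv f)) (volume.restrict (Set.Ioi 0)) :=
    h.aemeasurable_kernel_deriv_deriv
  have h_conv : ‖u ^ n * (g ⋆₊ deriv (deriv f)) u‖ₑ ≤ ∑ i ∈ Finset.range (n + 1),
      n.choose i * weightedSup (Set.Ioi 0) (n - i) g * halfLineMoment i (deriv (deriv f)) := by
    rw [posConvolution_mul_comm]
    refine (enorm_pow_mul_posConvolution_le hf''_meas hu n g).trans ?_
    gcongr
    exact weightedSup_mono Set.Ioo_subset_Ioi_self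
  have h_sup (p : ℝ → ℝ) : ‖u ^ n * p u‖ₑ ≤ weightedSup (Set.Ioi 0) n p :=
    enorm_pow_mul_le_weightedSup hu
  calc ‖u ^ n * deriv (deriv g) u‖ₑ
      = ‖φ * (f'₀ * (u ^ n * g u) + u ^ n * (g ⋆₊ deriv (deriv f)) u)
          + φ * f₀ * (u ^ n * deriv g u) + u ^ n * deriv (deriv w) u‖ₑ := by
        rw [(h.hasDerivAt_deriv hu (hw u hu)).deriv]
        ring_nf
    _ ≤ ‖φ * (f'₀ * (u ^ n * g u) + u ^ n * (g ⋆₊ deriv (deriv f)) u)‖ₑ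
          + ‖φ * f₀ * (u ^ n * deriv g u)‖ₑ + ‖u ^ n * deriv (deriv w) u‖ₑ :=
        (enorm_add_le _ _).trans (by gcongr; exact enorm_add_le _ _)
    _ ≤ ‖φ‖ₑ * (‖f'₀‖ₑ * ‖u ^ n * g u‖ₑ + ‖u ^ n * (g ⋆₊ deriv (deriv f)) u‖ₑ)
          + ‖φ * f₀‖ₑ * ‖u ^ n * deriv g u‖ₑ + ‖u ^ n * deriv (deriv w) u‖ₑ := by
        rw [enorm_mul φ, enorm_mul (φ * f₀), ← enorm_mul f'₀]
        gcongr
        exact enorm_add_le _ _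
    _ ≤ secondDerivBound φ f w g f₀ f'₀ n := by
        unfold secondDerivBound
        gcongr <;> first | exact h_conv | exact h_sup _

lemma secondDerivBound_lt_top (hg : ∀ i ≤ n, weightedSup (Set.Ioi 0) i g < ⊤)
    (hg' : weightedSup (Set.Ioi 0) n (deriv g) < ⊤)
    (hf'' : ∀ i ≤ n, halfLineMoment i (deriv (deriv f)) < ⊤)
    (hw'' : weightedSup (Set.Ioi 0) n (deriv (deriv w)) < ⊤) :
    secondDerivBound φ f w g f₀ f'₀ n < ⊤ := by
  have h_sum : ∑ i ∈ Finset.range (n + 1), n.choose i * weightedSup (Set.Ioi 0) (n - i) g *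
      halfLineMoment i (deriv (deriv f)) < ⊤ := by
    refine ENNReal.sum_lt_top.2 fun i hi => ENNReal.mul_lt_top (ENNReal.mul_lt_top
      (ENNReal.natCast_lt_top _) (hg _ (Nat.sub_le n i))) (hf'' i ?_)
    exact Nat.lt_succ_iff.1 (Finset.mem_range.1 hi)
  have hg_n := hg n le_rfl
  unfold secondDerivBound
  finiteness

lemma secondDerivBound_two
    (hf''_meas : AEMeasurable (deriv (deriv f)) (volume.restrict (Set.Ioi 0)))
    (hf'' : ∀ i ≤ 2, halfLineMoment i (deriv (deriv f)) < ⊤) :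
    secondDerivBound φ f w g f₀ f'₀ 2 =
      ENNReal.ofReal |φ| *
          (ENNReal.ofReal ((∫ y in Set.Ioi 0, |deriv (deriv f) y|) + |f'₀|) *
              (⨆ u ∈ Set.Ioi (0 : ℝ), ‖u ^ 2 * g u‖ₑ) +
            2 * ENNReal.ofReal (∫ y in Set.Ioi 0, y * |deriv (deriv f) y|) *
              (⨆ u ∈ Set.Ioi (0 : ℝ), ‖u * g u‖ₑ) +
            ENNReal.ofReal (∫ y in Set.Ioi 0, y ^ 2 * |deriv (deriv f) y|) *
              (⨆ u ∈ Set.Ioi (0 : ℝ), ‖g u‖ₑ)) +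
        ENNReal.ofReal |φ * f₀| * (⨆ u ∈ Set.Ioi (0 : ℝ), ‖u ^ 2 * deriv g u‖ₑ) +
        (⨆ u ∈ Set.Ioi (0 : ℝ), ‖u ^ 2 * deriv (deriv w) u‖ₑ) := by
  have h_moment (i : ℕ) (hi : i ≤ 2) := ofReal_setIntegral_pow_mul_abs hf''_meas (hf'' i hi)
  have h0 := h_moment 0 zero_le_two
  have h1 := h_moment 1 one_le_two
  simp only [pow_zero, pow_one, one_mul] at h0 h1
  rw [ENNReal.ofReal_add (integral_nonneg fun y => abs_nonneg _) (abs_nonneg _), h0, h1,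
    h_moment 2 le_rfl]
  simp only [secondDerivBound, weightedSup, ← Real.enorm_eq_ofReal_abs,
    Finset.sum_range_succ, Finset.range_zero, Finset.sum_empty, Nat.choose_zero_right,
    Nat.choose_one_right, Nat.choose_self, Nat.cast_one, Nat.cast_ofNat,
    Nat.sub_zero, Nat.sub_self, Nat.add_one_sub_one, pow_zero, pow_one, one_mul]
  ring

end Estimates

theorem stmt_12_general (φ : ℝ) (f v m : ℝ → ℝ)
    (hf_integrable : IntegrableOn f (Set.Ioi 0))
    (hφ : |φ| * ∫ y in Set.Ioi (0 : ℝ), |f y| < 1)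
    (hm_loc : ∀ x : ℝ, 0 < x → ∃ M, ∀ u ∈ Set.Icc (0 : ℝ) x, |m u| ≤ M)
    (hm_eq : ∀ u : ℝ, 0 < u → m u = φ * (∫ y in (0 : ℝ)..u, m (u - y) * f y) + v u)
    (hf2 : IntegrableOn (fun y => y ^ 2 * f y) (Set.Ioi 0))
    (f0 f'0 v'0 : ℝ)
    (hf_cd : ContDiffOn ℝ 2 f (Set.Ioi 0))
    (hf0 : Tendsto f (𝓝[>] (0 : ℝ)) (𝓝 f0))
    (hf'0 : Tendsto (deriv f) (𝓝[>] (0 : ℝ)) (𝓝 f'0))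
    (hv_cd : ContDiffOn ℝ 3 v (Set.Ioi 0))
    (hv0 : Tendsto v (𝓝[>] (0 : ℝ)) (𝓝 (v 0)))
    (hv'0 : Tendsto (deriv v) (𝓝[>] (0 : ℝ)) (𝓝 v'0))
    (hv''0 : ∃ L, Tendsto (iteratedDeriv 2 v) (𝓝[>] (0 : ℝ)) (𝓝 L))
    (h4a : IntegrableOn (fun y => |iteratedDeriv 2 f y|) (Set.Ioi 0))
    (h4b : IntegrableOn (fun y => y ^ 2 * |iteratedDeriv 2 f y|) (Set.Ioi 0))
    (h5a : ∃ M, ∀ u : ℝ, 0 < u → |u ^ 2 * w1 φ v f u| ≤ M)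
    (h5b : ∃ M, ∀ u : ℝ, 0 < u → |u ^ 2 * w2 φ f0 v'0 v f u| ≤ M)
    (h6a : ∃ M, ∀ u : ℝ, 0 < u → |u ^ 2 * iteratedDeriv 2 (w1 φ v f) u| ≤ M) :
    ContDiffOn ℝ 3 m (Set.Ioi 0) ∧
    ∀ B : ℝ≥0∞,
      B = ENNReal.ofReal |φ| *
            (ENNReal.ofReal ((∫ y in Set.Ioi (0 : ℝ), |iteratedDeriv 2 f y|) + |f'0|)
                * (⨆ u ∈ Set.Ioi (0 : ℝ), (‖u ^ 2 * deriv m u‖₊ : ℝ≥0∞))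
              + 2 * ENNReal.ofReal (∫ y in Set.Ioi (0 : ℝ), y * |iteratedDeriv 2 f y|)
                * (⨆ u ∈ Set.Ioi (0 : ℝ), (‖u * deriv m u‖₊ : ℝ≥0∞))
              + ENNReal.ofReal (∫ y in Set.Ioi (0 : ℝ), y ^ 2 * |iteratedDeriv 2 f y|)
                * (⨆ u ∈ Set.Ioi (0 : ℝ), (‖deriv m u‖₊ : ℝ≥0∞)))
          + ENNReal.ofReal |φ * f0|
            * (⨆ u ∈ Set.Ioi (0 : ℝ), (‖u ^ 2 * iteratedDeriv 2 m u‖₊ : ℝ≥0∞))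
          + (⨆ u ∈ Set.Ioi (0 : ℝ), (‖u ^ 2 * iteratedDeriv 2 (w1 φ v f) u‖₊ : ℝ≥0∞)) →
      (⨆ u ∈ Set.Ioi (0 : ℝ), (‖u ^ 2 * iteratedDeriv 3 m u‖₊ : ℝ≥0∞)) ≤ B ∧ B < ⊤ := by
  obtain ⟨v''0, hv''0⟩ := hv''0
  simp only [iteratedDeriv_succ, iteratedDeriv_zero, ← enorm_eq_nnnorm] at *
  have hv' : ContDiffOn ℝ 2 (deriv v) (Set.Ioi 0) := hv_cd.deriv_of_isOpen isOpen_Ioi le_rfl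
  have hw1 : ContDiffOn ℝ 2 (w1 φ v f) (Set.Ioi 0) := (contDiffOn_const.mul hf_cd).add hv'
  have hw1'_diff (u : ℝ) (hu : 0 < u) : DifferentiableAt ℝ (deriv (w1 φ v f)) u :=
    differentiableAt_deriv_of_contDiffOn_two isOpen_Ioi hw1 hu
  have hR : RegularRenewal φ f v m f0 f'0 (v 0) v'0 :=
    .of_contDiffOn (solvesRenewal_iff.2 hm_eq) hm_loc hf_cd hf0 hf'0 h4a
      (hv_cd.of_le (by norm_num)) hv0 hv'0
  have hR1 : RegularRenewal φ f (w1 φ v f) (deriv m) f0 f'0 (φ * v 0 * f0 + v'0)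
      (φ * v 0 * f'0 + v''0) :=
    hR.deriv (hv_cd.of_le (by norm_num)) hv''0
  have hφ' : ‖φ‖ₑ * halfLineMoment 0 f < 1 := by
    rwa [enorm_mul_halfLineMoment_zero hf_integrable, ENNReal.ofReal_lt_one]
  have hf_zero := halfLineMoment_zero_lt_top hf_integrable
  have hm' (i : ℕ) (hi : i ≤ 2) : weightedSup (Set.Ioi 0) i (deriv m) < ⊤ :=
    hR.weightedSup_deriv_lt_top hφ' hf_zero hf2.2 (weightedSup_lt_top_iff.2 h5a) hi
  have hm'' : weightedSup (Set.Ioi 0) 2 (deriv (deriv m)) < ⊤ :=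
    hR1.weightedSup_deriv_lt_top hφ' hf_zero hf2.2 (weightedSup_lt_top_iff.2 h5b) le_rfl
  have hf'' (i : ℕ) (hi : i ≤ 2) : halfLineMoment i (deriv (deriv f)) < ⊤ := by
    rw [← halfLineMoment_abs]
    exact halfLineMoment_lt_top_of_le h4a.1.aemeasurable (halfLineMoment_zero_lt_top h4a) h4b.2 hi
  have h_bound := hR1.weightedSup_deriv_deriv_le hw1'_diff 2
  have h_top : secondDerivBound φ f (w1 φ v f) (deriv m) f0 f'0 2 < ⊤ :=
    secondDerivBound_lt_top hm' hm'' hf'' (weightedSup_lt_top_iff.2 h6a)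
  rw [secondDerivBound_two hR.aemeasurable_kernel_deriv_deriv hf''] at h_bound h_top
  refine ⟨contDiffOn_add_one_of_deriv isOpen_Ioi (fun u hu =>
    (hR.hasDerivAt hu).differentiableAt.differentiableWithinAt) (hR1.contDiffOn_two hw1), ?_⟩
  rintro B rfl
  exact ⟨h_bound, h_top⟩

/-- under conditions (1)-(6) on the defective renewal equation,
`m` is three times continuously differentiable on `(0,∞)` and
`‖u² m'''(u)‖ ≤ φ((I₀(f'') + |f'(0)|)‖u² m'(u)‖ + 2 I₁(f'')‖u m'(u)‖ + I₂(f'')‖m'‖)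
 + φ f(0) ‖u² m''(u)‖ + ‖u² w₁''(u)‖ < ∞`,
all suprema being over `(0,∞)` and computed in `ℝ≥0∞`. -/
theorem stmt_12 (φ : ℝ) (hφ0 : 0 < φ) (hφ1 : φ < 1)
    (f F v m : ℝ → ℝ)
    (hf_nonneg : ∀ u : ℝ, 0 < u → 0 ≤ f u)
    (hf_integrable : MeasureTheory.IntegrableOn f (Set.Ioi 0))
    (hf_total : ∫ y in Set.Ioi (0:ℝ), f y = 1)
    (hF_def : ∀ u : ℝ, 0 ≤ u → F u = ∫ y in (0:ℝ)..u, f y)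
    (hFf : ∀ u : ℝ, 0 < u → HasDerivAt F (f u) u)
    (hv_loc : ∀ x : ℝ, 0 < x → ∃ M, ∀ u ∈ Set.Icc (0:ℝ) x, |v u| ≤ M)
    (hm_loc : ∀ x : ℝ, 0 < x → ∃ M, ∀ u ∈ Set.Icc (0:ℝ) x, |m u| ≤ M)
    (hm_eq : ∀ u : ℝ, 0 ≤ u →
      m u = φ * (∫ y in (0:ℝ)..u, m (u - y) * f y) + v u)
    -- Condition 1: `Z` has finite variance
    (hZ1 : MeasureTheory.IntegrableOn (fun y => y * f y) (Set.Ioi 0))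
    (hZ2 : MeasureTheory.IntegrableOn (fun y => y ^ 2 * f y) (Set.Ioi 0))
    -- Condition 2: `F, v ∈ C²₀([0,∞))`
    (hF_c : ContinuousOn F (Set.Ici 0)) (hF_cd : ContDiffOn ℝ 2 F (Set.Ioi 0))
    (hF_lim : ∀ k ≤ 2, ∃ L, Tendsto (iteratedDeriv k F) (𝓝[>] (0:ℝ)) (𝓝 L))
    (hv_c : ContinuousOn v (Set.Ici 0)) (hv_cd : ContDiffOn ℝ 2 v (Set.Ioi 0))
    (hv_lim : ∀ k ≤ 2, ∃ L, Tendsto (iteratedDeriv k v) (𝓝[>] (0:ℝ)) (𝓝 L))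
    (f0 f'0 v'0 : ℝ)
    (hf0 : Tendsto f (𝓝[>] (0:ℝ)) (𝓝 f0))
    (hv'0 : Tendsto (deriv v) (𝓝[>] (0:ℝ)) (𝓝 v'0))
    -- Condition 3: `f'` and `v''` belong to `C²([0,∞))`
    (hf_cd3 : ContDiffOn ℝ 3 f (Set.Ioi 0))
    (hf'0 : Tendsto (deriv f) (𝓝[>] (0:ℝ)) (𝓝 f'0))
    (hv_cd4 : ContDiffOn ℝ 4 v (Set.Ioi 0))
    (hv''0 : ∃ L, Tendsto (iteratedDeriv 2 v) (𝓝[>] (0:ℝ)) (𝓝 L))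
    -- Condition 4: `I₀(f'') < ∞` and `I₂(f'') < ∞`
    (h4a : MeasureTheory.IntegrableOn (fun y => |iteratedDeriv 2 f y|) (Set.Ioi 0))
    (h4b : MeasureTheory.IntegrableOn (fun y => y ^ 2 * |iteratedDeriv 2 f y|)
      (Set.Ioi 0))
    -- Condition 5: `‖u² w₁(u)‖ < ∞` and `‖u² w₂(u)‖ < ∞`
    (h5a : ∃ M, ∀ u : ℝ, 0 < u → |u ^ 2 * w1 φ v f u| ≤ M)
    (h5b : ∃ M, ∀ u : ℝ, 0 < u → |u ^ 2 * w2 φ f0 v'0 v f u| ≤ M)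
    -- Condition 6: `‖u² w₁''(u)‖ < ∞` and `‖u² w₂''(u)‖ < ∞`
    (h6a : ∃ M, ∀ u : ℝ, 0 < u → |u ^ 2 * iteratedDeriv 2 (w1 φ v f) u| ≤ M)
    (h6b : ∃ M, ∀ u : ℝ, 0 < u → |u ^ 2 * iteratedDeriv 2 (w2 φ f0 v'0 v f) u| ≤ M) :
    ContDiffOn ℝ 3 m (Set.Ioi 0) ∧
    ∀ B : ℝ≥0∞,
      B = ENNReal.ofReal φ *
            (ENNReal.ofReal ((∫ y in Set.Ioi (0:ℝ), |iteratedDeriv 2 f y|) + |f'0|)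
                * (⨆ u ∈ Set.Ioi (0:ℝ), (‖u ^ 2 * deriv m u‖₊ : ℝ≥0∞))
              + 2 * ENNReal.ofReal (∫ y in Set.Ioi (0:ℝ), y * |iteratedDeriv 2 f y|)
                * (⨆ u ∈ Set.Ioi (0:ℝ), (‖u * deriv m u‖₊ : ℝ≥0∞))
              + ENNReal.ofReal (∫ y in Set.Ioi (0:ℝ), y ^ 2 * |iteratedDeriv 2 f y|)
                * (⨆ u ∈ Set.Ioi (0:ℝ), (‖deriv m u‖₊ : ℝ≥0∞)))
          + ENNReal.ofReal (φ * f0)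
            * (⨆ u ∈ Set.Ioi (0:ℝ), (‖u ^ 2 * iteratedDeriv 2 m u‖₊ : ℝ≥0∞))
          + (⨆ u ∈ Set.Ioi (0:ℝ), (‖u ^ 2 * iteratedDeriv 2 (w1 φ v f) u‖₊ : ℝ≥0∞)) →
      (⨆ u ∈ Set.Ioi (0:ℝ), (‖u ^ 2 * iteratedDeriv 3 m u‖₊ : ℝ≥0∞)) ≤ B ∧ B < ⊤ := by
  have hφ : |φ| * ∫ y in Set.Ioi (0:ℝ), |f y| < 1 := by
    rwa [setIntegral_congr_fun measurableSet_Ioi fun u hu => abs_of_nonneg (hf_nonneg u hu),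
      hf_total, mul_one, abs_of_pos hφ0]
  have hf0_nonneg : 0 ≤ f0 := ge_of_tendsto hf0 (eventually_of_mem self_mem_nhdsWithin hf_nonneg)
  have hv0 : ContinuousWithinAt v (Set.Ioi 0) 0 :=
    (hv_c 0 Set.self_mem_Ici).mono Set.Ioi_subset_Ici_self
  simpa only [abs_of_pos hφ0, abs_of_nonneg (mul_nonneg hφ0.le hf0_nonneg)] using
    stmt_12_general φ f v m hf_integrable hφ hm_loc (fun u hu => hm_eq u hu.le) hZ2 f0 f'0 v'0
      (hf_cd3.of_le (by norm_num)) hf0 hf'0 (hv_cd4.of_le (by norm_num)) hv0 hv'0 hv''0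
      h4a h4b h5a h5b h6a
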